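/- arXiv:2601.10426 — 3 statements merged into one kernel-verified Lean document; each statement's English description precedes it below -/
import Mathlib

section
/- Let R be a Noetherian integral domain, 𝔭 a prime ideal of R, and M a finitely generated R-module such that M/𝔭M is a torsion module over the integral domain R/𝔭. Then for every integer j ≥ 1, the module Tor_j^R(R/𝔭, M) is a torsion module over R/𝔭. -/
/-!
A finitely generated `M` with `M/𝔭M` torsion over `R/𝔭` satisfies `s M ⊆ 𝔭 M` for a single
`s ∉ 𝔭`.  By Cayley–Hamilton, multiplication by `s` is a root of a monic polynomial whose lower
coefficients lie in `𝔭`; evaluating that polynomial at `s` gives `r ≡ sⁿ` modulo `𝔭`, hence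
`r ∉ 𝔭`, with `r M = 0`.  Since `Tor_j(R/𝔭, -)` is an `R`-linear functor, this one `r` kills
`Tor_j(R/𝔭, M)`.
-/

open CategoryTheory Polynomial

/-- A left derived functor of a linear functor is killed by any scalar that kills the object:
both `r` and `0` lift the zero map of `X` to a projective resolution. -/
lemma leftDerived_smul_id_eq_zero {R C D : Type*} [CommRing R] [Category* C] [Category* D]
    [Abelian C] [Abelian D] [HasProjectiveResolutions C] [Linear R C] [Linear R D]
    (F : C ⥤ D) [F.Additive] [F.Linear R] (n : ℕ) (X : C) (r : R) (h : r • 𝟙 X = 0) :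
    r • 𝟙 ((F.leftDerived n).obj X) = 0 := by
  let P := projectiveResolution X
  have h₁ := F.leftDerived_map_eq n (0 : X ⟶ X) (P := P) (Q := P) (r • 𝟙 P.complex) (by
    ext
    simp only [HomologicalComplex.smul_f_apply, Linear.smul_comp, Category.id_comp,
      Functor.map_zero, HomologicalComplex.zero_f, Limits.comp_zero]
    -- the degree-zero target of `π` is `X` itself, where `r` acts as zero
    rw [← Category.comp_id (P.π.f 0), ← Linear.comp_smul]
    exact (congrArg (P.π.f 0 ≫ ·) h).trans Limits.comp_zero)
  have h₂ := F.leftDerived_map_eq n (0 : X ⟶ X) (P := P) (Q := P) 0 (by simp)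
  have h₃ : (F.mapHomologicalComplex (ComplexShape.down ℕ) ⋙
      HomologicalComplex.homologyFunctor D _ n).map (r • 𝟙 P.complex) = r • 𝟙 _ := by
    rw [Functor.comp_map, Functor.map_smul, CategoryTheory.Functor.map_id]
    refine (ShortComplex.homologyMap_smul ((HomologicalComplex.shortComplexFunctor D _ n).map
      (𝟙 ((F.mapHomologicalComplex (ComplexShape.down ℕ)).obj P.complex))) r).trans ?_
    congr 1
    exact (HomologicalComplex.homologyFunctor D _ n).map_id _
  have h₄ : (F.leftDerived n).map (0 : X ⟶ X) = 0 := by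
    rw [h₂, Functor.map_zero]
    exact (congrArg _ Limits.zero_comp).trans Limits.comp_zero
  rw [h₃, h₄] at h₁
  simpa using h₁.symm

/-- A finitely generated module whose reduction modulo a prime `𝔭` is torsion is killed by an
element outside `𝔭`. -/
lemma exists_notMem_smul_eq_zero {R M : Type*} [CommRing R] (𝔭 : Ideal R) (h𝔭 : 𝔭.IsPrime)
    [AddCommGroup M] [Module R M] [Module.Finite R M]
    (htor : Module.IsTorsion (R ⧸ 𝔭) (M ⧸ (𝔭 • ⊤ : Submodule R M))) :
    ∃ r : R, r ∉ 𝔭 ∧ ∀ m : M, r • m = 0 := by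
  have : Module.Finite (R ⧸ 𝔭) (M ⧸ (𝔭 • ⊤ : Submodule R M)) :=
    Module.Finite.of_restrictScalars_finite R _ _
  obtain ⟨t, ht, ht'⟩ := Submodule.annihilator_top_inter_nonZeroDivisors htor
  obtain ⟨s, rfl⟩ := Ideal.Quotient.mk_surjective t
  have hs : s ∉ 𝔭 := fun h =>
    nonZeroDivisors.ne_zero ht' (Ideal.Quotient.eq_zero_iff_mem.mpr h)
  have hsM : LinearMap.range (algebraMap R (Module.End R M) s) ≤ 𝔭 • ⊤ := by
    rintro _ ⟨m, rfl⟩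
    rw [← Submodule.Quotient.mk_eq_zero]
    exact Submodule.mem_annihilator.mp ht (Submodule.Quotient.mk m) trivial
  obtain ⟨p, hp, -, hc, hpz⟩ :=
    LinearMap.exists_monic_and_natDegree_eq_and_coeff_mem_pow_and_aeval_eq_zero
      R _ 𝔭 hsM
  refine ⟨p.eval s, fun h => hs ?_, fun m => ?_⟩
  · refine h𝔭.mem_of_pow_mem p.natDegree ?_
    rw [eval_eq_sum_range, Finset.sum_range_succ, hp.coeff_natDegree, one_mul] at h
    refine (Ideal.add_mem_iff_right 𝔭 (Ideal.sum_mem 𝔭 fun i hi => ?_)).mp h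
    refine Ideal.mul_mem_right _ _ (Ideal.pow_le_self ?_ (hc i))
    have := Finset.mem_range.mp hi
    omega
  · rw [aeval_algebraMap_apply, coe_aeval_eq_eval] at hpz
    exact LinearMap.congr_fun hpz m

/-- Let `R` be a Noetherian integral domain, `𝔭` a prime ideal of `R`, and
`M` a finitely generated `R`-module such that `M/𝔭M` is a torsion module over the integral
domain `R/𝔭`.  Then for every integer `j ≥ 1`, the module `Tor_j^R(R/𝔭, M)` is a torsion
module over `R/𝔭`.  (Since `Tor_j^R(R/𝔭, M)` is killed by `𝔭`, being torsion over `R/𝔭`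
means that every element is annihilated by some `r ∈ R` with `r ∉ 𝔭`.) -/
theorem tor_torsion_of_quotient_torsion
    (R : Type) [CommRing R] [IsDomain R] [IsNoetherianRing R]
    (𝔭 : Ideal R) (h𝔭 : 𝔭.IsPrime)
    (M : Type) [AddCommGroup M] [Module R M] [Module.Finite R M]
    (htor : Module.IsTorsion (R ⧸ 𝔭) (M ⧸ (𝔭 • ⊤ : Submodule R M)))
    (j : ℕ) (hj : 1 ≤ j) :
    ∀ x : ((Tor (ModuleCat R) j).obj (ModuleCat.of R (R ⧸ 𝔭))).obj (ModuleCat.of R M),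
      ∃ r : R, r ∉ 𝔭 ∧ r • x = 0 := by
  obtain ⟨r, hr, hrM⟩ := exists_notMem_smul_eq_zero 𝔭 h𝔭 htor
  intro x
  refine ⟨r, hr, ?_⟩
  have h := leftDerived_smul_id_eq_zero
    ((MonoidalCategory.tensoringLeft (ModuleCat R)).obj (ModuleCat.of R (R ⧸ 𝔭))) j
    (ModuleCat.of R M) r (by ext m; exact hrM m)
  exact LinearMap.congr_fun (congrArg ModuleCat.Hom.hom h) x
end

section
/- Let R be an integral domain, 𝔭 a prime ideal of R, and M a finitely generated R-module such that M/𝔭M is a torsion module over the integral domain R/𝔭. Then the annihilator ideal Ann_R(M) is not contained in 𝔭; equivalently 𝔭 + Ann_R(M) ≠ 𝔭. -/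
/-!
The proof is the determinant trick. Torsion of `M/𝔭M` over `R/𝔭` gives, for each generator of `M`,
a multiplier outside `𝔭` sending it into `𝔭M`; the product `s` of these over a finite generating set
is outside `𝔭` (primality) and satisfies `sM ⊆ 𝔭M`. Cayley–Hamilton applied to multiplication by
`s` yields a monic polynomial `q` with all lower coefficients in `𝔭` such that `q(s)` kills `M`.
Since `q(s) ≡ s ^ deg q` modulo `𝔭`, the element `q(s)` of the annihilator is outside `𝔭`.
-/

theorem exists_notMem_smul_mem_of_quotient_torsion
    {R : Type*} [CommRing R] {𝔭 : Ideal R} (h𝔭 : 𝔭.IsPrime)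
    {M : Type*} [AddCommGroup M] [Module R M]
    (htor : Module.IsTorsion (R ⧸ 𝔭) (M ⧸ (𝔭 • ⊤ : Submodule R M))) (x : M) :
    ∃ s : R, s ∉ 𝔭 ∧ s • x ∈ (𝔭 • ⊤ : Submodule R M) := by
  obtain ⟨⟨a, ha⟩, hax⟩ := @htor (Submodule.Quotient.mk x)
  obtain ⟨s, rfl⟩ := Ideal.Quotient.mk_surjective a
  refine ⟨s, fun hs => ?_, ?_⟩
  · rw [Ideal.Quotient.eq_zero_iff_mem.mpr hs] at ha
    have : Nontrivial (R ⧸ 𝔭) := Ideal.Quotient.nontrivial_iff.mpr h𝔭.ne_top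
    exact zero_notMem_nonZeroDivisors ha
  · rw [← Submodule.Quotient.mk_eq_zero]
    exact hax

theorem exists_notMem_range_le_of_quotient_torsion
    {R : Type*} [CommRing R] {𝔭 : Ideal R} (h𝔭 : 𝔭.IsPrime)
    {M : Type*} [AddCommGroup M] [Module R M] [Module.Finite R M]
    (htor : Module.IsTorsion (R ⧸ 𝔭) (M ⧸ (𝔭 • ⊤ : Submodule R M))) :
    ∃ s : R, s ∉ 𝔭 ∧ ∀ x : M, s • x ∈ (𝔭 • ⊤ : Submodule R M) := by
  choose f hf hfx using exists_notMem_smul_mem_of_quotient_torsion h𝔭 htor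
  obtain ⟨S, hS⟩ := Module.Finite.fg_top (R := R) (M := M)
  refine ⟨∏ x ∈ S, f x, fun h => ?_, fun x => ?_⟩
  · obtain ⟨x, -, hx⟩ := h𝔭.prod_mem_iff.mp h
    exact hf x hx
  · have hle : (⊤ : Submodule R M) ≤
        (𝔭 • ⊤ : Submodule R M).comap (LinearMap.lsmul R M (∏ x ∈ S, f x)) := by
      rw [← hS, Submodule.span_le, hS]
      intro y hy
      obtain ⟨c, hc⟩ := Finset.dvd_prod_of_mem f hy
      simp only [Submodule.comap_coe, Set.mem_preimage, LinearMap.lsmul_apply, SetLike.mem_coe]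
      rw [hc, mul_comm, mul_smul]
      exact Submodule.smul_mem _ _ (hfx y)
    exact hle (Submodule.mem_top (x := x))

theorem annihilator_not_le_of_quotient_torsion
    {R : Type*} [CommRing R] {𝔭 : Ideal R} (h𝔭 : 𝔭.IsPrime)
    {M : Type*} [AddCommGroup M] [Module R M] [Module.Finite R M]
    (htor : Module.IsTorsion (R ⧸ 𝔭) (M ⧸ (𝔭 • ⊤ : Submodule R M))) :
    ¬ (⊤ : Submodule R M).annihilator ≤ 𝔭 := by
  intro hle
  obtain ⟨s, hs, hsM⟩ := exists_notMem_range_le_of_quotient_torsion h𝔭 htor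
  obtain ⟨q, hq, -, hcoeff, hq0⟩ :=
    LinearMap.exists_monic_and_natDegree_eq_and_coeff_mem_pow_and_aeval_eq_zero R
      (algebraMap R (Module.End R M) s) 𝔭 (by rintro _ ⟨x, rfl⟩; exact hsM x)
  rw [Polynomial.aeval_algebraMap_apply] at hq0
  have hann : q.eval s ∈ (⊤ : Submodule R M).annihilator :=
    Submodule.mem_annihilator.mpr fun x _ => by simpa using LinearMap.congr_fun hq0 x
  have hmem := hle hann
  rw [Polynomial.eval_eq_sum_range, Finset.sum_range_succ, hq.coeff_natDegree, one_mul] at hmem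
  refine hs (h𝔭.mem_of_pow_mem q.natDegree ((𝔭.add_mem_iff_right ?_).mp hmem))
  refine 𝔭.sum_mem fun i hi => 𝔭.mul_mem_right _ ?_
  have hi' := Finset.mem_range.mp hi
  exact Ideal.pow_le_self (by omega) (hcoeff i)


/-- Let `R` be an integral domain, `𝔭` a prime ideal of `R`, and `M` a
finitely generated `R`-module such that `M/𝔭M` is a torsion module over the integral
domain `R/𝔭`.  Then `Ann_R(M)` is not contained in `𝔭`; equivalently, `𝔭 + Ann_R(M) ≠ 𝔭`. -/
theorem annihilator_not_le_prime_of_quotient_torsion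
    (R : Type*) [CommRing R] [IsDomain R]
    (𝔭 : Ideal R) (h𝔭 : 𝔭.IsPrime)
    (M : Type*) [AddCommGroup M] [Module R M] [Module.Finite R M]
    (htor : Module.IsTorsion (R ⧸ 𝔭) (M ⧸ (𝔭 • ⊤ : Submodule R M))) :
    ¬ (⊤ : Submodule R M).annihilator ≤ 𝔭 ∧
      𝔭 ⊔ (⊤ : Submodule R M).annihilator ≠ 𝔭 := by
  have h := annihilator_not_le_of_quotient_torsion h𝔭 htor
  exact ⟨h, fun he => h (sup_eq_left.mp he)⟩
end

section
/- Let R = O⟦W₁,…,W_m⟧ (m ≥ 0) and let Λ = R⟦W⟧ be the power series ring in one further variable. Let M be a finitely generated Λ-module which is finitely generated as an R-module. Then M is pseudo-null over Λ if and only if M is a torsion R-module. -/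
/-!
Put `Λ = R⟦X⟧`. Only the following is used of `R`: it is a Noetherian domain of finite Krull
dimension. For `M` finite over `Λ`, pseudo-nullity says that no prime of height at most `1` contains
`Ann_Λ M`. The Cayley–Hamilton theorem, applied to the finite `R`-module `M`, shows that every
`s : Λ` is a root modulo `Ann_Λ M` of a monic polynomial over `R`.

* If `M` is `R`-torsion, then a prime `P ⊇ Ann_Λ M` contains a nonzero constant and a monic
  polynomial in `X`. With `p = P ∩ R`, the prime `pΛ` is nonzero, lies in `P`, and contains no monic
  polynomial, so `0 ⊂ pΛ ⊂ P` is a strict chain and `P` has height at least `2`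
  (`one_lt_height`).
* If `M` is not `R`-torsion, then `Ann_Λ M ∩ R = 0`, so some prime `P ⊇ Ann_Λ M` has `P ∩ R = 0`.
  As `Λ/P` is integral over `R`, going up gives `coheight P ≥ dim R`, while
  `height P + coheight P ≤ dim Λ = dim R + 1`; hence `height P ≤ 1` (`height_le_one`).
-/

/-- A finitely generated module `M` over a Noetherian integrally closed domain `A` is
*pseudo-null* if the localization `M_P` vanishes for every prime ideal `P` of `A` of
height at most `1`. -/
def IsPseudoNull (A : Type*) [CommRing A] (M : Type*) [AddCommGroup M] [Module A M] :
    Prop :=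
  ∀ P : PrimeSpectrum A, Order.height P ≤ 1 →
    Subsingleton (LocalizedModule P.asIdeal.primeCompl M)

section

open PowerSeries

/-- Cayley–Hamilton: if the `S`-module `M` is finite over `R`, then `S ⧸ Ann_S M` is integral
over `R`. -/
lemma exists_monic_aeval_mem_annihilator {R S M : Type*} [CommRing R] [CommRing S] [Algebra R S]
    [AddCommGroup M] [Module R M] [Module S M] [IsScalarTower R S M] [Module.Finite R M] (s : S) :
    ∃ q : Polynomial R, q.Monic ∧ Polynomial.aeval s q ∈ Module.annihilator S M := by
  obtain ⟨q, hq, h⟩ := LinearMap.exists_monic_and_aeval_eq_zero R (Algebra.lsmul R R M s)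
  refine ⟨q, hq, Module.mem_annihilator.mpr fun x ↦ ?_⟩
  rw [Polynomial.aeval_algHom_apply] at h
  exact LinearMap.congr_fun h x

/-- `X` is a nonzerodivisor in the Jacobson radical of `R⟦X⟧`, so killing it lowers the dimension by
exactly one; `R` need not be local. -/
lemma ringKrullDim_powerSeries {R : Type*} [CommRing R] [IsNoetherianRing R] :
    ringKrullDim R⟦X⟧ = ringKrullDim R + 1 := by
  have hX : (X : R⟦X⟧) ∈ Ring.jacobson R⟦X⟧ := by
    rw [← Ideal.jacobson_bot, Ideal.mem_jacobson_bot]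
    intro y
    simp [isUnit_iff_constantCoeff]
  have hreg : IsSMulRegular R⟦X⟧ (X : R⟦X⟧) := fun a b h ↦ X_mul_cancel h
  have hker : RingHom.ker (constantCoeff (R := R)) = Ideal.span {X} := by
    ext f
    rw [RingHom.mem_ker, Ideal.mem_span_singleton, X_dvd_iff]
  rw [← ringKrullDim_quotient_span_singleton_succ_eq_ringKrullDim_of_mem_jacobson hreg hX,
    ← hker, ringKrullDim_eq_of_ringEquiv
      (RingHom.quotientKerEquivOfSurjective (constantCoeff_surj (R := R)))]

lemma ringKrullDim_mvPowerSeries_fin (O : Type*) [CommRing O] [IsNoetherianRing O] (m : ℕ) :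
    ringKrullDim (MvPowerSeries (Fin m) O) = ringKrullDim O + m := by
  induction m with
  | zero =>
    simpa using ringKrullDim_eq_of_ringEquiv
      (MvPowerSeries.isEmptyEquiv (Fin 0) O).toRingEquiv
  | succ n ih =>
    rw [ringKrullDim_eq_of_ringEquiv (MvPowerSeries.finSuccEquiv O n).toRingEquiv,
      ringKrullDim_powerSeries, ih, add_assoc, Nat.cast_succ]

/-- Going up along `R ⊆ S ⧸ P`: a chain of primes of `R` starting at `0` lifts to a chain of primes
of `S` starting at `P`. -/
lemma ringKrullDim_le_coheight {R S : Type*} [CommRing R] [IsDomain R] [CommRing S] [Algebra R S]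
    (P : PrimeSpectrum S) (hP : P.asIdeal.under R = ⊥) [Algebra.IsIntegral R (S ⧸ P.asIdeal)] :
    ringKrullDim R ≤ Order.coheight P := by
  rw [ringKrullDim, ← Order.coheight_bot_eq_krullDim, WithBot.coe_le_coe,
    Order.coheight_eq_iSup_head_eq]
  refine iSup₂_le fun l hl ↦ ?_
  have : (⊥ : Ideal (S ⧸ P.asIdeal)).LiesOver (RelSeries.head l).asIdeal := by
    constructor
    rw [hl, PrimeSpectrum.asIdeal_bot, ← hP]
    ext r
    simp [Ideal.mem_comap, ← Ideal.Quotient.mk_algebraMap, Ideal.Quotient.eq_zero_iff_mem]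
  obtain ⟨L, hL, hhead, -⟩ := Ideal.exists_ltSeries_of_hasGoingUp l (⊥ : Ideal (S ⧸ P.asIdeal))
  let f : PrimeSpectrum (S ⧸ P.asIdeal) → PrimeSpectrum S :=
    PrimeSpectrum.comap (Ideal.Quotient.mk P.asIdeal)
  have hf : StrictMono f := (Monotone.strictMono_of_injective
    (fun _ _ h ↦ Ideal.comap_mono h)
    (PrimeSpectrum.comap_injective_of_surjective _ Ideal.Quotient.mk_surjective))
  have hfP : f L.head = P := by
    rw [hhead]
    ext1
    simp [f, ← RingHom.ker_eq_comap_bot]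
  rw [← hL, ← LTSeries.map_length L f hf]
  exact Order.length_le_coheight (by rw [LTSeries.head_map, hfP])

/-- A prime of `R⟦X⟧` that contracts to `0` and has quotient integral over `R` has height at most
`1`, because `height P + dim R ≤ height P + coheight P ≤ dim R⟦X⟧ = dim R + 1`. -/
lemma height_le_one {R : Type*} [CommRing R] [IsDomain R] [IsNoetherianRing R]
    (hR : ringKrullDim R < ⊤) (P : PrimeSpectrum R⟦X⟧) (hP : P.asIdeal.under R = ⊥)
    [Algebra.IsIntegral R (R⟦X⟧ ⧸ P.asIdeal)] : Order.height P ≤ 1 := by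
  have h1 := ringKrullDim_le_coheight P hP
  have h2 : ((Order.height P + Order.coheight P : ℕ∞) : WithBot ℕ∞) ≤ ringKrullDim R + 1 := by
    rw [← ringKrullDim_powerSeries, ringKrullDim,
      Order.krullDim_eq_iSup_height_add_coheight_of_nonempty, WithBot.coe_le_coe]
    exact le_iSup (fun a : PrimeSpectrum R⟦X⟧ ↦ Order.height a + Order.coheight a) P
  obtain ⟨n, hn⟩ : ∃ n : ℕ, ringKrullDim R = n := by
    have h0 := ringKrullDim_nonneg_of_nontrivial (R := R)
    generalize ringKrullDim R = d at *
    induction d with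
    | bot => simp at h0
    | coe d =>
      have hd : d ≠ ⊤ := by rintro rfl; exact absurd hR (lt_irrefl _)
      lift d to ℕ using hd
      exact ⟨d, rfl⟩
  rw [hn] at h1 h2
  replace h1 : (n : ℕ∞) ≤ Order.coheight P := WithBot.coe_le_coe.mp h1
  replace h2 : Order.height P + Order.coheight P ≤ (n : ℕ∞) + 1 := WithBot.coe_le_coe.mp h2
  have h3 : (n : ℕ∞) + Order.height P ≤ n + 1 := by
    rw [add_comm]; exact (add_le_add_right h1 _).trans h2
  exact (ENat.add_le_add_iff_left (ENat.natCast_ne_top n)).mp h3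

/-- For finitely generated `p`, a power series with all coefficients in `p` lies in the extension
`p R⟦X⟧`. -/
lemma ker_map_mk_le {R : Type*} [CommRing R] {p : Ideal R} (hp : p.FG) :
    RingHom.ker (PowerSeries.map (Ideal.Quotient.mk p)) ≤ p.map (C (R := R)) := by
  obtain ⟨n, a, rfl⟩ := Submodule.fg_iff_exists_fin_generating_family.mp hp
  intro g hg
  have hc (k : ℕ) : ∃ b : Fin n → R, ∑ i, b i * a i = coeff k g := by
    have : coeff k g ∈ Submodule.span R (Set.range a) := by
      rw [← Ideal.Quotient.eq_zero_iff_mem, ← coeff_map, RingHom.mem_ker.mp hg, map_zero]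
    simpa [Submodule.mem_span_range_iff_exists_fun] using this
  choose b hb using hc
  have : g = ∑ i, mk (fun k ↦ b k i) * C (a i) := by
    ext k
    simp [← hb, map_sum]
  rw [this]
  exact Ideal.sum_mem _ fun i _ ↦ Ideal.mul_mem_left _ _
    (Ideal.mem_map_of_mem _ (Submodule.subset_span ⟨i, rfl⟩))

/-- A prime containing both a nonzero constant and a monic polynomial has height at least `2`:
the power series with coefficients in `P ∩ R` form a prime strictly between `0` and `P`. -/
lemma one_lt_height {R : Type*} [CommRing R] [IsDomain R] [IsNoetherianRing R]
    (P : PrimeSpectrum R⟦X⟧) {r : R} (hr : r ≠ 0) (hrP : C r ∈ P.asIdeal)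
    {q : Polynomial R} (hq : q.Monic) (hqP : (q : R⟦X⟧) ∈ P.asIdeal) : 1 < Order.height P := by
  set p : Ideal R := P.asIdeal.comap C
  let φ := PowerSeries.map (Ideal.Quotient.mk p)
  let Q : PrimeSpectrum R⟦X⟧ := ⟨RingHom.ker φ, RingHom.ker_isPrime φ⟩
  have hle : Q.asIdeal ≤ P.asIdeal :=
    (ker_map_mk_le ((isNoetherianRing_iff_ideal_fg R).mp ‹_› p)).trans Ideal.map_comap_le
  have hbot : ⊥ < Q := by
    refine bot_lt_iff_ne_bot.mpr fun h ↦ hr ?_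
    have hrQ : C r ∈ Q.asIdeal := by
      have hrp : Ideal.Quotient.mk p r = 0 := Ideal.Quotient.eq_zero_iff_mem.mpr hrP
      simp [Q, φ, RingHom.mem_ker, hrp]
    rw [h, PrimeSpectrum.asIdeal_bot, Ideal.mem_bot] at hrQ
    exact (map_eq_zero_iff C C_injective).mp hrQ
  have hlt : Q < P := by
    refine lt_of_le_of_ne hle fun h ↦ ?_
    rw [← h] at hqP
    have h0 : φ q = 0 := hqP
    have h1 := congrArg (coeff q.natDegree) h0
    simp [φ, hq.coeff_natDegree] at h1
  have h1 := Order.height_add_one_le hbot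
  have h2 := Order.height_add_one_le hlt
  have h3 : (1 : ℕ∞) + 1 ≤ Order.height P :=
    (add_le_add_left ((le_add_left le_rfl).trans h1) 1).trans h2
  exact lt_of_lt_of_le (by norm_num) h3

/-- The equivalence over any Noetherian domain `R` of finite Krull dimension. -/
theorem isPseudoNull_iff_isTorsion_of_finite {R M : Type*} [CommRing R] [IsDomain R]
    [IsNoetherianRing R] (hR : ringKrullDim R < ⊤) [AddCommGroup M] [Module R⟦X⟧ M] [Module R M]
    [IsScalarTower R R⟦X⟧ M] [Module.Finite R⟦X⟧ M] [Module.Finite R M] :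
    IsPseudoNull R⟦X⟧ M ↔ Module.IsTorsion R M := by
  have hsupp (P : PrimeSpectrum R⟦X⟧) : Subsingleton (LocalizedModule P.asIdeal.primeCompl M) ↔
      ¬ Module.annihilator R⟦X⟧ M ≤ P.asIdeal := by
    rw [← Module.mem_support_iff_of_finite, Module.notMem_support_iff]
  have hann (r : R) : C r ∈ Module.annihilator R⟦X⟧ M ↔ r ∈ Module.annihilator R M := by
    simp_rw [Module.mem_annihilator, ← algebraMap_smul R⟦X⟧ r]
    rfl
  simp only [IsPseudoNull, hsupp]
  constructor
  · intro h
    by_contra htor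
    have hR0 : Module.annihilator R M = ⊥ := by
      by_contra hne
      obtain ⟨r, hr, hr0⟩ := Submodule.exists_mem_ne_zero_of_ne_bot hne
      exact htor fun x ↦ ⟨⟨r, mem_nonZeroDivisors_of_ne_zero hr0⟩, Module.mem_annihilator.mp hr x⟩
    -- A prime over `Ann_Λ M` that avoids the nonzero constants.
    obtain ⟨P, hP, hle, hdisj⟩ := Ideal.exists_le_prime_disjoint (Module.annihilator R⟦X⟧ M)
      ((nonZeroDivisors R).map (C (R := R))) <| by
        rw [Set.disjoint_left]
        rintro _ h ⟨r, hr, rfl⟩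
        have h0 : r ∈ Module.annihilator R M := (hann r).mp h
        rw [hR0, Ideal.mem_bot] at h0
        exact nonZeroDivisors.ne_zero hr h0
    have hint : Algebra.IsIntegral R (R⟦X⟧ ⧸ P) := by
      refine ⟨fun s ↦ ?_⟩
      obtain ⟨s, rfl⟩ := Ideal.Quotient.mk_surjective s
      obtain ⟨q, hq, hqs⟩ := exists_monic_aeval_mem_annihilator (R := R) (M := M) s
      refine ⟨q, hq, ?_⟩
      rw [← Polynomial.aeval_def, ← Ideal.Quotient.mkₐ_eq_mk R, Polynomial.aeval_algHom_apply,
        Ideal.Quotient.mkₐ_eq_mk, Ideal.Quotient.eq_zero_iff_mem]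
      exact hle hqs
    refine h ⟨P, hP⟩ (height_le_one hR ⟨P, hP⟩ ?_) hle
    refine (Submodule.eq_bot_iff _).mpr fun r hr ↦ ?_
    by_contra hr0
    exact Set.disjoint_left.mp hdisj (show C r ∈ P from hr)
      ⟨r, mem_nonZeroDivisors_of_ne_zero hr0, rfl⟩
  · intro h P hP hle
    obtain ⟨r, hr, hr0⟩ : ∃ r ∈ Module.annihilator R M, r ≠ 0 := by
      obtain ⟨s, hs⟩ := Module.Finite.fg_top (R := R) (M := M)
      choose a ha using fun x ↦ @h x
      refine ⟨∏ x ∈ s, (a x : R), ?_, Finset.prod_ne_zero_iff.mpr fun x _ ↦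
        nonZeroDivisors.ne_zero (a x).2⟩
      rw [← Submodule.annihilator_top, ← hs, Submodule.mem_annihilator_span]
      rintro ⟨x, hx⟩
      obtain ⟨k, hk⟩ := Finset.dvd_prod_of_mem (fun x ↦ (a x : R)) hx
      rw [hk, mul_comm, mul_smul]
      exact (congrArg (k • ·) (ha x)).trans (smul_zero k)
    obtain ⟨q, hq, hqX⟩ := exists_monic_aeval_mem_annihilator (R := R) (M := M) (X : R⟦X⟧)
    have hqX' : Polynomial.aeval (X : R⟦X⟧) q = q := by
      have : Polynomial.aeval (R := R) (X : R⟦X⟧) = Polynomial.coeToPowerSeries.algHom R := by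
        ext; simp
      rw [this]
      simp [Polynomial.coeToPowerSeries.algHom_apply]
    exact hP.not_gt (one_lt_height P hr0 (hle ((hann r).mpr hr)) hq (hqX' ▸ hle hqX))

end

/-- Let `p` be an odd prime, `O` the ring of integers of a finite
extension `K` of `ℚ_p` (realized as the integral closure of `ℤ_p` in `K`),
`R = O⟦W₁,…,W_m⟧` (`m ≥ 0`) and `Λ = R⟦W⟧`.  Let `M` be a finitely generated `Λ`-module
which is finitely generated as an `R`-module.  Then `M` is pseudo-null over `Λ` if and
only if `M` is a torsion `R`-module. -/
theorem isPseudoNull_iff_isTorsion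
    (p : ℕ) [Fact p.Prime] (hp : p ≠ 2)
    (K : Type) [Field K] [Algebra ℚ_[p] K] [FiniteDimensional ℚ_[p] K]
    [Algebra ℤ_[p] K] [IsScalarTower ℤ_[p] ℚ_[p] K]
    (m : ℕ)
    (M : Type) [AddCommGroup M]
    [Module (PowerSeries (MvPowerSeries (Fin m) (integralClosure ℤ_[p] K))) M]
    [Module (MvPowerSeries (Fin m) (integralClosure ℤ_[p] K)) M]
    [IsScalarTower (MvPowerSeries (Fin m) (integralClosure ℤ_[p] K))
      (PowerSeries (MvPowerSeries (Fin m) (integralClosure ℤ_[p] K))) M]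
    [Module.Finite (PowerSeries (MvPowerSeries (Fin m) (integralClosure ℤ_[p] K))) M]
    (hfg : Module.Finite (MvPowerSeries (Fin m) (integralClosure ℤ_[p] K)) M) :
    IsPseudoNull (PowerSeries (MvPowerSeries (Fin m) (integralClosure ℤ_[p] K))) M ↔
      Module.IsTorsion (MvPowerSeries (Fin m) (integralClosure ℤ_[p] K)) M := by
  have : CharZero K := charZero_of_injective_algebraMap (algebraMap ℚ_[p] K).injective
  have hO : IsDedekindDomain (integralClosure ℤ_[p] K) :=
    integralClosure.isDedekindDomain ℤ_[p] ℚ_[p] K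
  have : IsDomain (MvPowerSeries (Fin m) (integralClosure ℤ_[p] K)) :=
    NoZeroDivisors.to_isDomain _
  refine isPseudoNull_iff_isTorsion_of_finite ?_
  rw [ringKrullDim_mvPowerSeries_fin]
  have hdim : ringKrullDim (integralClosure ℤ_[p] K) ≤ (1 : ℕ) :=
    (Ring.krullDimLE_iff (n := 1)).mp inferInstance
  calc _ ≤ ((1 + m : ℕ) : WithBot ℕ∞) := by push_cast at hdim ⊢; gcongr
    _ < ⊤ := WithBot.coe_lt_coe.mpr (ENat.natCast_lt_top _)
end
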